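/- For lattice polytopes P_1, ..., P_n in R^n, MV(P_1,...,P_n) = 1 + sum over nonempty subsets I of [n] of (-1)^(dim(P_I) - |I|) times the number of lattice points in the relative interior of P_I. -/

import Mathlib

open scoped Pointwise
open MeasureTheory Finset

def IsLatticePt {n : ℕ} (x : Fin n → ℝ) : Prop := ∀ i, ∃ z : ℤ, x i = (z : ℝ)

def IsLatticePolytope {n : ℕ} (P : Set (Fin n → ℝ)) : Prop :=
  ∃ V : Finset (Fin n → ℝ), V.Nonempty ∧ (∀ v ∈ V, IsLatticePt v) ∧
    P = convexHull ℝ (V : Set (Fin n → ℝ))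

noncomputable def adim {n : ℕ} (A : Set (Fin n → ℝ)) : ℕ :=
  Module.finrank ℝ (affineSpan ℝ A).direction

def relintLat {n : ℕ} (A : Set (Fin n → ℝ)) : Set (Fin n → ℝ) :=
  {x ∈ intrinsicInterior ℝ A | IsLatticePt x}

def intLat {n : ℕ} (A : Set (Fin n → ℝ)) : Set (Fin n → ℝ) :=
  {x ∈ interior A | IsLatticePt x}

noncomputable def mixedVol {n m : ℕ} (P : Fin m → Set (Fin n → ℝ)) : ℝ :=
  ∑ I : Finset (Fin m), (-1 : ℝ) ^ (m - I.card) * (volume (∑ i ∈ I, P i)).toReal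

/-! Attach to a convex set the indicator function of its relative interior with sign `(-1) ^ dim`.
Integrating along lines against the Euler characteristic shows that linear relations between these
signed indicators, for bounded convex sets, are preserved by linear images.

The simplices `{x | ∑ x i = card ι, x ≥ 1_S}` satisfy such a relation, with coefficients
`(-1) ^ #S`. Its image under the linear map sending the basis vectors to the vertices of `P`, after
taking the product with `Q`, relates lattice translates of the sets `Q + k P` for
`0 ≤ k ≤ card ι`. Counting lattice points, the signed number of interior lattice points of
`Q + k P` has a vanishing iterated difference in `k`. So this number, for `∑ t i • P i`, is a
polynomial in `t`; this replaces Ehrhart–Macdonald reciprocity.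

The alternating sum of this polynomial over the vertices of the cube `[0, N] ^ n` is divisible by
`N ^ n`, and the quotient, a polynomial in `N`, tends to the mixed volume. Hence the quotient is
constant, and `N = 1` gives the formula, whose leading `1` is the term `I = ∅`. -/

open Filter Topology

section IntrinsicCore

variable {E F : Type*} [AddCommGroup E] [Module ℝ E] [AddCommGroup F] [Module ℝ F]

/-- The intrinsic core of `A`: the points from which `A` can be left, while staying in `A` for a
while, in the direction away from any other point of `A`. For a convex set this is the relative
interior, described without a topology. -/
def intrinsicCore (A : Set E) : Set E :=
  {x ∈ A | ∀ y ∈ A, ∃ ε : ℝ, 0 < ε ∧ x + ε • (x - y) ∈ A}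

variable {A : Set E} {B : Set F} {x y : E}

lemma intrinsicCore_subset : intrinsicCore A ⊆ A := fun _ hx => hx.1

lemma intrinsicCore_singleton (x : E) : intrinsicCore {x} = {x} := by
  refine intrinsicCore_subset.antisymm ?_
  rintro _ rfl
  refine ⟨rfl, ?_⟩
  rintro _ rfl
  exact ⟨1, one_pos, by simp⟩

lemma combo_mem_intrinsicCore (hA : Convex ℝ A) (hx : x ∈ intrinsicCore A) (hy : y ∈ A) {t : ℝ}
    (ht₀ : 0 < t) (ht₁ : t ≤ 1) : (1 - t) • y + t • x ∈ intrinsicCore A := by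
  refine ⟨hA hy hx.1 (sub_nonneg.2 ht₁) ht₀.le (by ring), fun w hw => ?_⟩
  obtain ⟨ε, hε, hp⟩ := hx.2 w hw
  have hd : 0 < 1 + ε - t * ε := by nlinarith
  refine ⟨t * ε / (1 + ε - t * ε), by positivity, ?_⟩
  have hcombo := hA hy hp (a := (1 + ε) * (1 - t) / (1 + ε - t * ε)) (b := t / (1 + ε - t * ε))
    (div_nonneg (mul_nonneg (by positivity) (sub_nonneg.2 ht₁)) hd.le) (by positivity)
    (by rw [← add_div, div_eq_one_iff_eq hd.ne']; ring)
  convert hcombo using 1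
  match_scalars <;> field_simp <;> ring

lemma convex_intrinsicCore (hA : Convex ℝ A) : Convex ℝ (intrinsicCore A) := by
  intro x hx y hy a b ha hb hab
  obtain rfl | hb := hb.eq_or_lt
  · simpa [show a = 1 by linarith] using hx
  · rw [show a = 1 - b by linarith]
    exact combo_mem_intrinsicCore hA hy hx.1 hb (by linarith)

lemma convex_preimage_line (hA : Convex ℝ A) (x d : E) :
    Convex ℝ ((fun t : ℝ => x + t • d) ⁻¹' A) := by
  intro s hs t ht a b ha hb hab
  have hmem := hA hs ht ha hb hab
  rw [Set.mem_preimage]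
  convert hmem using 1
  linear_combination (norm := module) -hab • x

lemma eventually_add_smul_mem (hA : Convex ℝ A) (hx : x ∈ intrinsicCore A) {d : E}
    (hd : d ∈ vectorSpan ℝ A) : ∀ᶠ t : ℝ in 𝓝 0, x + t • d ∈ A := by
  rw [vectorSpan_eq_span_vsub_set_left ℝ hx.1] at hd
  induction hd using Submodule.span_induction with
  | mem d hd =>
    obtain ⟨y, hy, rfl⟩ := hd
    obtain ⟨ε, hε, hεA⟩ := hx.2 y hy
    filter_upwards [Icc_mem_nhds neg_one_lt_zero hε] with t ht
    exact (convex_preimage_line hA x (x - y)).ordConnected.out (by simpa using hy) hεA ht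
  | zero => simp [hx.1]
  | add d e _ _ hd he =>
    have hdouble : Tendsto (fun t : ℝ => 2 * t) (𝓝 0) (𝓝 0) := by
      simpa using (continuous_const_mul (2 : ℝ)).tendsto 0
    filter_upwards [hdouble.eventually hd, hdouble.eventually he] with t htd hte
    convert hA htd hte (a := 1 / 2) (b := 1 / 2) (by norm_num) (by norm_num) (by norm_num) using 1
    module
  | smul r d _ hd =>
    have hscale : Tendsto (fun t : ℝ => t * r) (𝓝 0) (𝓝 0) := by
      simpa using (continuous_mul_const r).tendsto 0
    simpa only [smul_smul] using hscale.eventually hd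

lemma eventually_add_smul_mem_intrinsicCore (hA : Convex ℝ A) (hx : x ∈ intrinsicCore A) {d : E}
    (hd : d ∈ vectorSpan ℝ A) : ∀ᶠ t : ℝ in 𝓝 0, x + t • d ∈ intrinsicCore A := by
  have hdouble : Tendsto (fun t : ℝ => 2 * t) (𝓝 0) (𝓝 0) := by
    simpa using (continuous_const_mul (2 : ℝ)).tendsto 0
  filter_upwards [hdouble.eventually (eventually_add_smul_mem hA hx hd)] with t ht
  convert combo_mem_intrinsicCore hA hx ht (t := 1 / 2) (by norm_num) (by norm_num) using 1
  module

lemma intrinsicCore_prod (hA : Convex ℝ A) (hB : Convex ℝ B) :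
    intrinsicCore (A ×ˢ B) = intrinsicCore A ×ˢ intrinsicCore B := by
  apply Set.Subset.antisymm
  · rintro ⟨x, y⟩ ⟨⟨hx, hy⟩, h⟩
    refine ⟨⟨hx, fun a ha => ?_⟩, hy, fun b hb => ?_⟩
    · obtain ⟨ε, hε, h⟩ := h (a, y) ⟨ha, hy⟩
      exact ⟨ε, hε, h.1⟩
    · obtain ⟨ε, hε, h⟩ := h (x, b) ⟨hx, hb⟩
      exact ⟨ε, hε, h.2⟩
  · rintro ⟨x, y⟩ ⟨hx, hy⟩
    refine ⟨⟨hx.1, hy.1⟩, ?_⟩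
    rintro ⟨a, b⟩ ⟨ha, hb⟩
    have hev := (eventually_add_smul_mem hA hx (vsub_mem_vectorSpan ℝ hx.1 ha)).and
      (eventually_add_smul_mem hB hy (vsub_mem_vectorSpan ℝ hy.1 hb))
    obtain ⟨ε, h, hε⟩ :=
      ((hev.filter_mono nhdsWithin_le_nhds).and (self_mem_nhdsWithin (s := Set.Ioi 0))).exists
    exact ⟨ε, hε, h⟩

end IntrinsicCore

section IntrinsicInterior

variable {E : Type*} [NormedAddCommGroup E] [NormedSpace ℝ E] {A : Set E} {x y : E}

lemma mem_intrinsicInterior_iff_mem_nhdsWithin :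
    x ∈ intrinsicInterior ℝ A ↔ x ∈ affineSpan ℝ A ∧ A ∈ 𝓝[affineSpan ℝ A] x := by
  simp only [mem_intrinsicInterior, mem_interior_iff_mem_nhds]
  constructor
  · rintro ⟨y, hy, rfl⟩
    exact ⟨y.2, preimage_coe_mem_nhds_subtype.1 hy⟩
  · rintro ⟨hx, hA⟩
    exact ⟨⟨x, hx⟩, preimage_coe_mem_nhds_subtype.2 hA, rfl⟩

lemma intrinsicInterior_subset_intrinsicCore : intrinsicInterior ℝ A ⊆ intrinsicCore A := by
  intro x hx
  have hxA := intrinsicInterior_subset hx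
  refine ⟨hxA, fun y hy => ?_⟩
  have hcont : Tendsto (fun ε : ℝ => x + ε • (x - y)) (𝓝[>] 0) (𝓝[affineSpan ℝ A] x) := by
    refine tendsto_nhdsWithin_iff.2 ⟨?_, .of_forall fun ε => ?_⟩
    · have : Continuous fun ε : ℝ => x + ε • (x - y) := by fun_prop
      simpa using (this.tendsto 0).mono_left nhdsWithin_le_nhds
    · rw [add_comm]
      exact AffineSubspace.smul_vsub_vadd_mem _ ε (subset_affineSpan ℝ A hxA)
        (subset_affineSpan ℝ A hy) (subset_affineSpan ℝ A hxA)
  obtain ⟨ε, hεA, hε⟩ := ((hcont.eventually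
    (mem_intrinsicInterior_iff_mem_nhdsWithin.1 hx).2).and self_mem_nhdsWithin).exists
  exact ⟨ε, hε, hεA⟩

lemma combo_mem_intrinsicInterior (hA : Convex ℝ A) (hx : x ∈ intrinsicInterior ℝ A) (hy : y ∈ A)
    {t : ℝ} (ht₀ : 0 < t) (ht₁ : t ≤ 1) : (1 - t) • y + t • x ∈ intrinsicInterior ℝ A := by
  have hxA := intrinsicInterior_subset hx
  set z := (1 - t) • y + t • x
  have hz : z ∈ affineSpan ℝ A :=
    subset_affineSpan ℝ A (hA hy hxA (sub_nonneg.2 ht₁) ht₀.le (by ring))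
  have hinv : Tendsto (fun w => t⁻¹ • (w - y) + y) (𝓝[affineSpan ℝ A] z)
      (𝓝[affineSpan ℝ A] x) := by
    refine tendsto_nhdsWithin_iff.2 ⟨?_, ?_⟩
    · have hcont : Continuous fun w : E => t⁻¹ • (w - y) + y := by fun_prop
      convert (hcont.tendsto z).mono_left nhdsWithin_le_nhds using 2
      match_scalars <;> field_simp
      ring
    · filter_upwards [self_mem_nhdsWithin] with w hw
      exact AffineSubspace.smul_vsub_vadd_mem _ t⁻¹ hw (subset_affineSpan ℝ A hy)
        (subset_affineSpan ℝ A hy)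
  refine mem_intrinsicInterior_iff_mem_nhdsWithin.2 ⟨hz, ?_⟩
  filter_upwards [hinv.eventually (mem_intrinsicInterior_iff_mem_nhdsWithin.1 hx).2] with w hw
  convert hA hy hw (sub_nonneg.2 ht₁) ht₀.le (by ring) using 1
  match_scalars <;> field_simp
  ring

theorem intrinsicInterior_eq_intrinsicCore [FiniteDimensional ℝ E] (hA : Convex ℝ A) :
    intrinsicInterior ℝ A = intrinsicCore A := by
  refine intrinsicInterior_subset_intrinsicCore.antisymm fun x hx => ?_
  obtain ⟨c, hc⟩ := Set.Nonempty.intrinsicInterior hA ⟨x, hx.1⟩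
  obtain ⟨ε, hε, hεA⟩ := hx.2 c (intrinsicInterior_subset hc)
  convert combo_mem_intrinsicInterior hA hc hεA (t := ε / (1 + ε)) (by positivity)
    (div_le_one_of_le₀ (by linarith) (by positivity)) using 1
  match_scalars <;> field_simp <;> ring

end IntrinsicInterior

section IntrinsicCoreImage

variable {E F : Type*} [AddCommGroup E] [Module ℝ E] [FiniteDimensional ℝ E] [AddCommGroup F]
  [Module ℝ F] {A : Set E}

lemma intrinsicCore_nonempty (hA : Convex ℝ A) (hne : A.Nonempty) :
    (intrinsicCore A).Nonempty := by
  let e := (Module.finBasis ℝ E).equivFun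
  have hconv : Convex ℝ (e '' A) := hA.linear_image e.toLinearMap
  obtain ⟨_, hc⟩ := (hne.image e).intrinsicInterior hconv
  rw [intrinsicInterior_eq_intrinsicCore hconv] at hc
  obtain ⟨⟨c, hcA, rfl⟩, hc⟩ := hc
  refine ⟨c, hcA, fun y hy => ?_⟩
  obtain ⟨ε, hε, z, hz, hze⟩ := hc (e y) (Set.mem_image_of_mem e hy)
  refine ⟨ε, hε, ?_⟩
  rw [← map_sub, ← map_smul, ← map_add] at hze
  rwa [← e.injective hze]

lemma intrinsicCore_image (hA : Convex ℝ A) (f : E →ᵃ[ℝ] F) :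
    intrinsicCore (f '' A) = f '' intrinsicCore A := by
  have hf (x y : E) (ε : ℝ) : f (x + ε • (x - y)) = f x + ε • (f x - f y) := by
    have hsub : f.linear (x - y) = f x - f y := f.linearMap_vsub x y
    simpa only [vadd_eq_add, add_comm, map_smul, hsub] using f.map_vadd x (ε • (x - y))
  obtain rfl | hne := A.eq_empty_or_nonempty
  · simp [intrinsicCore]
  apply Set.Subset.antisymm
  · intro y hy
    obtain ⟨c, hc⟩ := intrinsicCore_nonempty hA hne
    obtain ⟨ε, hε, p, hp, hpy⟩ := hy.2 (f c) (Set.mem_image_of_mem f hc.1)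
    refine ⟨_, combo_mem_intrinsicCore hA hc hp (t := ε / (1 + ε)) (by positivity)
      (div_le_one_of_le₀ (by linarith) (by positivity)), ?_⟩
    rw [Convex.combo_affine_apply (by ring), hpy]
    match_scalars <;> field_simp <;> ring
  · rintro _ ⟨x, hx, rfl⟩
    refine ⟨Set.mem_image_of_mem f hx.1, ?_⟩
    rintro _ ⟨y, hy, rfl⟩
    obtain ⟨ε, hε, h⟩ := hx.2 y hy
    exact ⟨ε, hε, _, h, hf x y ε⟩

end IntrinsicCoreImage

section EulerIntegral

/-- `HasEulerIntegral f c` says that `f` has finitely many jumps to the right and that these jumps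
add up to `c`. On step functions this is integration against the Euler characteristic: a point has
integral `1` and a bounded open interval `-1`. -/
def HasEulerIntegral (f : ℝ → ℝ) (c : ℝ) : Prop :=
  ∃ jump : ℝ →₀ ℝ, (∀ x, ∀ᶠ y in 𝓝[>] x, f x - f y = jump x) ∧ jump.degree = c

lemma HasEulerIntegral.const_mul {f : ℝ → ℝ} {c : ℝ} (h : HasEulerIntegral f c) (a : ℝ) :
    HasEulerIntegral (fun x => a * f x) (a * c) := by
  obtain ⟨jump, hjump, rfl⟩ := h
  refine ⟨a • jump, fun x => ?_, ?_⟩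
  · filter_upwards [hjump x] with y hy
    simp [← hy, mul_sub]
  · exact (Finsupp.sum_smul_index (h := fun _ r => r) fun _ => rfl).trans
      (Finsupp.mul_sum a jump).symm

lemma HasEulerIntegral.sum {ι : Type*} {s : Finset ι} {f : ι → ℝ → ℝ} {c : ι → ℝ}
    (h : ∀ i ∈ s, HasEulerIntegral (f i) (c i)) :
    HasEulerIntegral (fun x => ∑ i ∈ s, f i x) (∑ i ∈ s, c i) := by
  choose! jump hjump hc using h
  refine ⟨∑ i ∈ s, jump i, fun x => ?_, by simp +contextual [hc]⟩
  filter_upwards [(Filter.eventually_all_finset s).2 fun i hi => hjump i hi x] with y hy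
  rw [← sum_sub_distrib, Finsupp.finsetSum_apply]
  exact sum_congr rfl hy

lemma hasEulerIntegral_zero : HasEulerIntegral (fun _ => 0) 0 := ⟨0, by simp, map_zero _⟩

lemma HasEulerIntegral.unique {f : ℝ → ℝ} {c c' : ℝ} (h : HasEulerIntegral f c)
    (h' : HasEulerIntegral f c') : c = c' := by
  obtain ⟨jump, hjump, rfl⟩ := h
  obtain ⟨jump', hjump', rfl⟩ := h'
  congr
  ext x
  obtain ⟨y, hy, hy'⟩ := ((hjump x).and (hjump' x)).exists
  exact hy.symm.trans hy'

lemma hasEulerIntegral_indicator_singleton (p : ℝ) :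
    HasEulerIntegral (Set.indicator {p} 1) 1 := by
  refine ⟨Finsupp.single p 1, fun x => ?_, Finsupp.degree_single p 1⟩
  have hp : ∀ᶠ y in 𝓝[>] x, y ≠ p := by
    rcases lt_or_ge x p with h | h
    · filter_upwards [Ioo_mem_nhdsGT h] with y hy using hy.2.ne
    · filter_upwards [self_mem_nhdsWithin] with y hy using (h.trans_lt hy).ne'
  filter_upwards [hp] with y hy
  simp [Set.indicator_apply, Finsupp.single_apply, hy, eq_comm]

lemma hasEulerIntegral_indicator_Ioo {u v : ℝ} (huv : u < v) :
    HasEulerIntegral ((Set.Ioo u v).indicator 1) (-1) := by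
  refine ⟨Finsupp.single u (-1), fun x => ?_, Finsupp.degree_single u (-1)⟩
  rcases lt_or_ge x u with hxu | hux
  · filter_upwards [Ioo_mem_nhdsGT hxu] with y hy
    simp [hxu.not_gt, hxu.ne', hy.2.not_gt]
  rcases lt_or_ge x v with hxv | hvx
  · filter_upwards [Ioo_mem_nhdsGT hxv] with y hy
    rcases hux.eq_or_lt with rfl | hux
    · simp [hy.1, hy.2]
    · simp [hux, hux.ne, hxv, hux.trans hy.1, hy.2]
  · filter_upwards [self_mem_nhdsWithin] with y (hy : x < y)
    simp [hvx.not_gt, (hvx.trans_lt hy).not_gt, (huv.trans_le hvx).ne]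

lemma exists_eq_Ioo_of_isOpen_of_isConnected {J : Set ℝ} (hJ : IsOpen J) (hconn : IsConnected J)
    (hb : Bornology.IsBounded J) : ∃ u v, u < v ∧ J = Set.Ioo u v := by
  have hJ_eq : J = Set.Ioo (sInf J) (sSup J) := by
    refine Set.Subset.antisymm ?_ (hconn.Ioo_csInf_csSup_subset hb.bddBelow hb.bddAbove)
    rw [← interior_Icc]
    exact interior_maximal (subset_Icc_csInf_csSup hb.bddBelow hb.bddAbove) hJ
  obtain ⟨t, ht⟩ := hconn.nonempty
  rw [hJ_eq] at ht
  exact ⟨sInf J, sSup J, ht.1.trans ht.2, hJ_eq⟩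

end EulerIntegral

section SignedIndicator

variable {E F : Type*} [AddCommGroup E] [Module ℝ E] [AddCommGroup F] [Module ℝ F]
  {A : Set E} {B : Set F}

/-- The indicator function of the relative interior of `A`, with sign `(-1) ^ dim A`. -/
noncomputable def signedIndicator (A : Set E) (x : E) : ℝ :=
  (-1) ^ Module.finrank ℝ (vectorSpan ℝ A) * (intrinsicCore A).indicator 1 x

lemma signedIndicator_of_notMem {x : E} (hx : x ∉ A) : signedIndicator A x = 0 := by
  rw [signedIndicator, Set.indicator_of_notMem (fun h => hx h.1), mul_zero]

lemma signedIndicator_singleton (x y : E) :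
    signedIndicator {x} y = ({x} : Set E).indicator 1 y := by
  rw [signedIndicator, vectorSpan_singleton, finrank_bot, intrinsicCore_singleton, pow_zero,
    one_mul]

/-- Boundedness of every linear functional on `A`; in finite dimension this is boundedness of `A`,
stated without a norm so that it makes sense in quotient spaces. -/
def IsWeaklyBounded (A : Set E) : Prop :=
  ∀ l : E →ₗ[ℝ] ℝ, Bornology.IsBounded (l '' A)

lemma IsWeaklyBounded.image (hA : IsWeaklyBounded A) (f : E →ₗ[ℝ] F) :
    IsWeaklyBounded (f '' A) := fun l => by
  simpa only [Set.image_image] using! hA (l ∘ₗ f)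

lemma isBounded_preimage_line (hA : IsWeaklyBounded A) (x : E) {d : E} (hd : d ≠ 0) :
    Bornology.IsBounded ((fun t : ℝ => x + t • d) ⁻¹' A) := by
  obtain ⟨l, hl⟩ : ∃ l : E →ₗ[ℝ] ℝ, l d = 1 := Module.Projective.exists_dual_eq_one ℝ hd
  obtain ⟨R, hR⟩ := (hA l).exists_norm_le
  refine (Metric.isBounded_iff_subset_closedBall (-l x)).2 ⟨R, fun t ht => ?_⟩
  simpa [hl, Real.dist_eq, add_comm] using hR _ (Set.mem_image_of_mem l ht)

lemma exists_preimage_line_eq_Ioo (hA : Convex ℝ A) (hb : IsWeaklyBounded A) {x d : E}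
    (hd : d ≠ 0) (hdA : d ∈ vectorSpan ℝ A)
    (hne : ((fun t : ℝ => x + t • d) ⁻¹' intrinsicCore A).Nonempty) :
    ∃ u v : ℝ, u < v ∧ (fun t : ℝ => x + t • d) ⁻¹' intrinsicCore A = Set.Ioo u v := by
  refine exists_eq_Ioo_of_isOpen_of_isConnected (isOpen_iff_mem_nhds.2 fun t ht => ?_)
    ⟨hne, (convex_preimage_line (convex_intrinsicCore hA) x d).isPreconnected⟩
    ((isBounded_preimage_line hb x hd).subset (Set.preimage_mono intrinsicCore_subset))
  have hshift : Tendsto (fun s : ℝ => s - t) (𝓝 t) (𝓝 0) := by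
    simpa using (continuous_sub_right t).tendsto t
  filter_upwards [hshift.eventually (eventually_add_smul_mem_intrinsicCore hA ht hdA)] with s hs
  rw [Set.mem_preimage]
  convert hs using 1
  module

lemma preimage_line_eq_singleton {C : Set E} {x d : E} (hd : d ∉ vectorSpan ℝ C) {t : ℝ}
    (ht : x + t • d ∈ C) : (fun t : ℝ => x + t • d) ⁻¹' C = {t} := by
  refine Set.eq_singleton_iff_unique_mem.2 ⟨ht, fun s hs => ?_⟩
  by_contra hst
  refine hd (((vectorSpan ℝ C).smul_mem_iff (sub_ne_zero.2 hst)).1 ?_)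
  convert vsub_mem_vectorSpan ℝ (Set.mem_preimage.1 hs) ht using 1
  rw [vsub_eq_sub]
  module

variable [FiniteDimensional ℝ E]

lemma finrank_map_add_finrank_inf_ker (f : E →ₗ[ℝ] F) (S : Submodule ℝ E) :
    Module.finrank ℝ (S.map f) + Module.finrank ℝ (S ⊓ LinearMap.ker f : Submodule ℝ E) =
      Module.finrank ℝ S := by
  have h := (f.domRestrict S).finrank_range_add_finrank_ker
  rwa [LinearMap.range_domRestrict, LinearMap.ker_domRestrict, ← Submodule.finrank_map_subtype_eq,
    Submodule.map_comap_subtype] at h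

lemma finrank_submodule_prod [FiniteDimensional ℝ F] (S : Submodule ℝ E) (T : Submodule ℝ F) :
    Module.finrank ℝ (S.prod T) = Module.finrank ℝ S + Module.finrank ℝ T := by
  have hker : S.prod T ⊓ LinearMap.ker (LinearMap.fst ℝ E F) = T.map (LinearMap.inr ℝ E F) := by
    ext ⟨x, y⟩
    simp +contextual [Submodule.mem_prod, and_comm]
  rw [← finrank_map_add_finrank_inf_ker (LinearMap.fst ℝ E F) (S.prod T), Submodule.prod_map_fst,
    hker, (T.equivMapOfInjective (LinearMap.inr ℝ E F) LinearMap.inr_injective).finrank_eq]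

lemma signedIndicator_image_of_injective (hA : Convex ℝ A) {f : E →ᵃ[ℝ] F}
    (hf : Function.Injective f) (x : E) :
    signedIndicator (f '' A) (f x) = signedIndicator A x := by
  classical
  have hdim := finrank_map_add_finrank_inf_ker f.linear (vectorSpan ℝ A)
  rw [f.map_vectorSpan, LinearMap.ker_eq_bot.2 (f.linear_injective_iff.2 hf), inf_bot_eq,
    finrank_bot, add_zero] at hdim
  rw [signedIndicator, signedIndicator, intrinsicCore_image hA, hdim, Set.indicator_apply,
    Set.indicator_apply, hf.mem_set_image]
  rfl

lemma signedIndicator_prod [FiniteDimensional ℝ F] (hA : Convex ℝ A) (hB : Convex ℝ B) (x : E)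
    (y : F) : signedIndicator (A ×ˢ B) (x, y) = signedIndicator A x * signedIndicator B y := by
  obtain rfl | hneA := A.eq_empty_or_nonempty
  · simp [signedIndicator_of_notMem]
  obtain rfl | hneB := B.eq_empty_or_nonempty
  · simp [signedIndicator_of_notMem]
  rw [signedIndicator, intrinsicCore_prod hA hB, vectorSpan_prod_eq hneA hneB,
    finrank_submodule_prod, pow_add, signedIndicator, signedIndicator]
  by_cases hx : x ∈ intrinsicCore A <;> by_cases hy : y ∈ intrinsicCore B <;> simp [hx, hy]

theorem hasEulerIntegral_signedIndicator_line (hA : Convex ℝ A) (hb : IsWeaklyBounded A)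
    {f : E →ₗ[ℝ] F} {d : E} (hd : d ≠ 0) (hf : LinearMap.ker f = Submodule.span ℝ {d}) (x : E) :
    HasEulerIntegral (fun t => signedIndicator A (x + t • d)) (signedIndicator (f '' A) (f x)) := by
  have hdim := finrank_map_add_finrank_inf_ker f (vectorSpan ℝ A)
  have hspan : (vectorSpan ℝ A).map f = vectorSpan ℝ (f '' A) := f.toAffineMap.map_vectorSpan
  rw [hspan, hf] at hdim
  set J := (fun t : ℝ => x + t • d) ⁻¹' intrinsicCore A with hJ
  have hJf : J.Nonempty ↔ f x ∈ f '' intrinsicCore A := by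
    constructor
    · rintro ⟨t, ht⟩
      have hfd : f d = 0 := LinearMap.mem_ker.1 (hf ▸ Submodule.mem_span_singleton_self d)
      exact ⟨_, ht, by simp [hfd]⟩
    · rintro ⟨z, hz, hzx⟩
      obtain ⟨t, ht⟩ := Submodule.mem_span_singleton.1 (hf ▸ LinearMap.sub_mem_ker_iff.2 hzx)
      exact ⟨t, by simpa [J, ht] using hz⟩
  have hfun : (fun t => signedIndicator A (x + t • d)) =
      fun t => (-1) ^ Module.finrank ℝ (vectorSpan ℝ A) * J.indicator 1 t := rfl
  have hcore : intrinsicCore (f '' A) = f '' intrinsicCore A := intrinsicCore_image hA f.toAffineMap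
  rw [hfun, signedIndicator, hcore]
  obtain hempty | hne := J.eq_empty_or_nonempty
  · rw [Set.indicator_of_notMem (by simp [← hJf, hempty]), hempty]
    simpa using hasEulerIntegral_zero
  rw [Set.indicator_of_mem (hJf.1 hne), Pi.one_apply, mul_one]
  by_cases hdA : d ∈ vectorSpan ℝ A
  · obtain ⟨u, v, huv, hIoo⟩ := exists_preimage_line_eq_Ioo hA hb hd hdA hne
    rw [inf_eq_right.2 ((Submodule.span_singleton_le_iff_mem _ _).2 hdA),
      finrank_span_singleton hd] at hdim
    rw [hJ, hIoo]
    convert (hasEulerIntegral_indicator_Ioo huv).const_mul _ using 1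
    rw [← hdim]
    ring
  · obtain ⟨t, ht⟩ := hne
    rw [((Submodule.disjoint_span_singleton' hd).2 hdA).eq_bot, finrank_bot, add_zero] at hdim
    rw [hJ, preimage_line_eq_singleton
      (fun h => hdA (vectorSpan_mono ℝ intrinsicCore_subset h)) ht, hdim]
    simpa using (hasEulerIntegral_indicator_singleton t).const_mul _

theorem sum_mul_signedIndicator_image_eq_zero {ι : Type*} {s : Finset ι} {a : ι → ℝ}
    {A : ι → Set E} (hA : ∀ k ∈ s, Convex ℝ (A k)) (hb : ∀ k ∈ s, IsWeaklyBounded (A k))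
    (h : ∀ x, ∑ k ∈ s, a k * signedIndicator (A k) x = 0) (f : E →ₗ[ℝ] F) (y : F) :
    ∑ k ∈ s, a k * signedIndicator (f '' A k) y = 0 := by
  by_cases hy : y ∈ Set.range f
  swap
  · refine sum_eq_zero fun k _ => ?_
    rw [signedIndicator_of_notMem (fun h => hy (Set.image_subset_range f _ h)), mul_zero]
  obtain ⟨x, rfl⟩ := hy
  induction hm : Module.finrank ℝ (LinearMap.ker f) generalizing E with
  | zero =>
    have hinj := LinearMap.ker_eq_bot.1 (Submodule.finrank_eq_zero.1 hm)
    rw [← h x]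
    exact sum_congr rfl fun k hk => congrArg (a k * ·)
      (signedIndicator_image_of_injective (hA k hk) (f := f.toAffineMap) hinj x)
  | succ m ih =>
    have : Nontrivial (LinearMap.ker f) := Module.nontrivial_of_finrank_pos (R := ℝ) (by omega)
    obtain ⟨⟨d, hdf⟩, hd⟩ := exists_ne (0 : LinearMap.ker f)
    replace hd : d ≠ 0 := by simpa using hd
    set q := (Submodule.span ℝ {d}).mkQ
    have hle : Submodule.span ℝ {d} ≤ LinearMap.ker f := by simpa using hdf
    have hstep (z) : ∑ k ∈ s, a k * signedIndicator (q '' A k) (q z) = 0 := by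
      refine HasEulerIntegral.unique
        (f := fun t => ∑ k ∈ s, a k * signedIndicator (A k) (z + t • d))
        (.sum fun k hk => (hasEulerIntegral_signedIndicator_line (hA k hk) (hb k hk) hd
          (Submodule.ker_mkQ _) z).const_mul (a k)) ?_
      simpa only [h] using hasEulerIntegral_zero
    have hker : Module.finrank ℝ (LinearMap.ker ((Submodule.span ℝ {d}).liftQ f hle)) = m := by
      have hdim := finrank_map_add_finrank_inf_ker q (LinearMap.ker f)
      rw [Submodule.ker_mkQ, inf_eq_right.2 hle, finrank_span_singleton hd] at hdim
      rw [Submodule.ker_liftQ]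
      exact Nat.succ_injective (hdim.trans hm)
    have := ih (fun k hk => (hA k hk).linear_image q) (fun k hk => (hb k hk).image q)
      (fun z => (Submodule.mkQ_surjective _ z).elim fun z hz => hz ▸ hstep z) _ (q x) hker
    simpa [Set.image_image, q] using this

end SignedIndicator

section Simplex

variable {E : Type*} [AddCommGroup E] [Module ℝ E] [FiniteDimensional ℝ E] {A : Set E}

lemma signedIndicator_vadd_smul (hA : Convex ℝ A) {r : ℝ} (hr : r ≠ 0) (v x : E) :
    signedIndicator (v +ᵥ r • A) (v + r • x) = signedIndicator A x := by
  have h := signedIndicator_image_of_injective hA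
    (f := AffineMap.const ℝ E v + r • AffineMap.id ℝ E)
    (fun x y hxy => smul_right_injective E hr (add_left_cancel hxy)) x
  simpa [← Set.image_smul, ← Set.image_vadd, Set.image_image] using! h

variable {ι : Type*} [Fintype ι]

lemma intrinsicCore_stdSimplex :
    intrinsicCore (stdSimplex ℝ ι) = {x | (∀ i, 0 < x i) ∧ ∑ i, x i = 1} := by
  classical
  apply Set.Subset.antisymm
  · refine fun x hx => ⟨fun i => ?_, hx.1.2⟩
    obtain ⟨ε, hε, h⟩ := hx.2 _ (single_mem_stdSimplex ℝ i)
    have := h.1 i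
    simp only [Pi.add_apply, Pi.smul_apply, Pi.sub_apply, Pi.single_eq_same, smul_eq_mul] at this
    nlinarith
  · refine fun x hx => ⟨⟨fun i => (hx.1 i).le, hx.2⟩, fun y hy => ?_⟩
    have hpos : ∀ᶠ ε : ℝ in 𝓝[>] 0, ∀ i, 0 < x i + ε * (x i - y i) := by
      refine eventually_all.2 fun i => ?_
      have hcont : Continuous fun ε : ℝ => x i + ε * (x i - y i) := by fun_prop
      exact (hcont.tendsto 0).mono_left nhdsWithin_le_nhds |>.eventually
        (lt_mem_nhds (by simpa using hx.1 i))
    obtain ⟨ε, hpos, hε⟩ := (hpos.and self_mem_nhdsWithin).exists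
    refine ⟨ε, hε, fun i => (hpos i).le, ?_⟩
    simp [sum_add_distrib, ← mul_sum, hx.2, hy.2]

lemma finrank_vectorSpan_stdSimplex [Nonempty ι] :
    Module.finrank ℝ (vectorSpan ℝ (stdSimplex ℝ ι)) = Fintype.card ι - 1 := by
  classical
  rw [← convexHull_rangle_single_eq_stdSimplex, ← direction_affineSpan, affineSpan_convexHull,
    direction_affineSpan]
  refine AffineIndependent.finrank_vectorSpan ?_ (Nat.succ_pred_eq_of_pos Fintype.card_pos).symm
  simpa using! (Pi.basisFun ℝ ι).linearIndependent.affineIndependent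

lemma signedIndicator_stdSimplex [Nonempty ι] (x : ι → ℝ) :
    signedIndicator (stdSimplex ℝ ι) x = (-1) ^ (Fintype.card ι - 1) *
      Set.indicator {x : ι → ℝ | (∀ i, 0 < x i) ∧ ∑ i, x i = 1} 1 x := by
  rw [signedIndicator, finrank_vectorSpan_stdSimplex, intrinsicCore_stdSimplex]

variable [DecidableEq ι]

/-- The simplex of all `x` with coordinate sum `card ι` which dominate the indicator function of
`S`, as a translate of a dilate of the standard simplex. -/
def shiftedSimplex (S : Finset ι) : Set (ι → ℝ) :=
  (S : Set ι).indicator (1 : ι → ℝ) +ᵥ (#Sᶜ : ℝ) • stdSimplex ℝ ι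

lemma signedIndicator_shiftedSimplex {S : Finset ι} (hS : S ≠ univ) (x : ι → ℝ) :
    signedIndicator (shiftedSimplex S) x = (-1) ^ (Fintype.card ι - 1) *
      Set.indicator {x : ι → ℝ | (∀ i, (S : Set ι).indicator 1 i < x i) ∧
        ∑ i, x i = Fintype.card ι} 1 x := by
  have hSc : Sᶜ.Nonempty := nonempty_iff_ne_empty.2 (compl_eq_empty_iff S |>.not.2 hS)
  have : Nonempty ι := hSc.to_type
  set v : ι → ℝ := (S : Set ι).indicator 1
  have hr : 0 < (#Sᶜ : ℝ) := Nat.cast_pos.2 hSc.card_pos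
  have hv : ∑ i, v i = Fintype.card ι - #Sᶜ := by
    simp [v, Set.indicator_apply, card_compl, Nat.cast_sub (card_le_univ S)]
  have hx : x = v + (#Sᶜ : ℝ) • ((#Sᶜ : ℝ)⁻¹ • (x - v)) := by
    rw [smul_inv_smul₀ hr.ne', add_sub_cancel]
  have hsum : (#Sᶜ : ℝ) = ∑ i, x i - (Fintype.card ι - #Sᶜ) ↔ ∑ i, x i = Fintype.card ι := by
    constructor <;> intro h <;> linarith
  nth_rw 1 [hx]
  rw [shiftedSimplex, signedIndicator_vadd_smul (convex_stdSimplex ℝ ι) hr.ne',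
    signedIndicator_stdSimplex]
  simp only [Set.indicator_apply, Set.mem_ofPred_eq, Pi.smul_apply, Pi.sub_apply, smul_eq_mul,
    ← mul_sum, sum_sub_distrib, hv, inv_mul_eq_one₀ hr.ne', hsum,
    mul_pos_iff_of_pos_left (inv_pos.2 hr), sub_pos, Pi.one_apply]

lemma shiftedSimplex_univ [Nonempty ι] : shiftedSimplex (univ : Finset ι) = {1} := by
  rw [shiftedSimplex, compl_univ, card_empty, Nat.cast_zero,
    Set.zero_smul_set ⟨_, single_mem_stdSimplex ℝ (Classical.arbitrary ι)⟩, coe_univ,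
    Set.indicator_univ, ← Set.singleton_zero, Set.vadd_set_singleton, vadd_eq_add, add_zero]

lemma signedIndicator_shiftedSimplex_eq_zero [Nonempty ι] (S : Finset ι) {x : ι → ℝ}
    (hx : ¬((∀ i, 0 < x i) ∧ ∑ i, x i = Fintype.card ι)) :
    signedIndicator (shiftedSimplex S) x = 0 := by
  obtain rfl | hS := eq_or_ne S univ
  · rw [shiftedSimplex_univ, signedIndicator_singleton, Set.indicator_of_notMem]
    rintro rfl
    simp at hx
  · rw [signedIndicator_shiftedSimplex hS, Set.indicator_of_notMem, mul_zero]
    exact fun h => hx ⟨fun i => (Set.indicator_nonneg (fun _ _ => zero_le_one) i).trans_lt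
      (h.1 i), h.2⟩

lemma neg_one_pow_mul_signedIndicator_shiftedSimplex [Nonempty ι] (S : Finset ι) {x : ι → ℝ}
    (hpos : ∀ i, 0 < x i) (hsum : ∑ i, x i = Fintype.card ι) :
    (-1) ^ #S * signedIndicator (shiftedSimplex S) x = (-1) ^ (Fintype.card ι - 1) *
      ((if S ⊆ ({i | 1 < x i} : Finset ι) then (-1) ^ #S else 0) -
        if S = univ then ({1} : Set (ι → ℝ)).indicator 1 x else 0) := by
  obtain rfl | hS := eq_or_ne S univ
  · have hle : ¬univ ⊆ ({i | 1 < x i} : Finset ι) := by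
      intro h
      have hlt : ∑ _i : ι, (1 : ℝ) < ∑ i, x i :=
        sum_lt_sum_of_nonempty univ_nonempty fun i hi => by simpa using h hi
      simp [hsum] at hlt
    obtain ⟨m, hm⟩ := Nat.exists_eq_succ_of_ne_zero (Fintype.card_ne_zero (α := ι))
    rw [shiftedSimplex_univ, signedIndicator_singleton, if_pos rfl, if_neg hle, card_univ, hm,
      Nat.succ_sub_one, pow_succ]
    ring
  · have hmem : x ∈ {x : ι → ℝ | (∀ i, (S : Set ι).indicator 1 i < x i) ∧
        ∑ i, x i = Fintype.card ι} ↔ S ⊆ ({i | 1 < x i} : Finset ι) := by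
      simp only [Set.mem_ofPred_eq, hsum, and_true, Finset.subset_iff, mem_filter_univ]
      refine forall_congr' fun i => ?_
      by_cases hi : i ∈ S <;> simp [hi, hpos i]
    rw [signedIndicator_shiftedSimplex hS, if_neg hS]
    by_cases h : S ⊆ ({i | 1 < x i} : Finset ι)
    · rw [Set.indicator_of_mem (hmem.2 h), if_pos h, Pi.one_apply, mul_one, sub_zero, mul_comm]
    · rw [Set.indicator_of_notMem (mt hmem.1 h), if_neg h]
      ring

theorem sum_neg_one_pow_mul_signedIndicator_shiftedSimplex [Nonempty ι] (x : ι → ℝ) :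
    ∑ S : Finset ι, (-1) ^ #S * signedIndicator (shiftedSimplex S) x = 0 := by
  by_cases hx : (∀ i, 0 < x i) ∧ ∑ i, x i = Fintype.card ι
  swap
  · simp only [signedIndicator_shiftedSimplex_eq_zero _ hx, mul_zero, sum_const_zero]
  obtain ⟨hpos, hsum⟩ := hx
  set T : Finset ι := {i | 1 < x i} with hT
  have hT_empty : T = ∅ ↔ x = 1 := by
    refine ⟨fun h => ?_, fun h => by simp [T, h]⟩
    have hle : ∀ i ∈ univ, x i ≤ 1 := by simpa [T, filter_eq_empty_iff] using h
    exact funext fun i => (sum_eq_sum_iff_of_le hle).1 (by simp [hsum]) i (mem_univ i)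
  have hpowerset : ∑ S : Finset ι, (if S ⊆ T then (-1 : ℝ) ^ #S else 0) =
      ({1} : Set (ι → ℝ)).indicator 1 x := by
    have h : ∑ S ∈ T.powerset, (-1 : ℝ) ^ #S = if T = ∅ then 1 else 0 := by
      exact_mod_cast sum_powerset_neg_one_pow_card (x := T)
    simp only [← mem_powerset, sum_ite_mem, univ_inter, h, hT_empty, Set.indicator_apply,
      Set.mem_singleton_iff, Pi.one_apply]
  simp only [neg_one_pow_mul_signedIndicator_shiftedSimplex _ hpos hsum, ← hT]
  rw [← mul_sum, sum_sub_distrib, hpowerset, sum_ite_eq', if_pos (mem_univ _), sub_self, mul_zero]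

end Simplex

section SimplexRelation

variable {E : Type*} [NormedAddCommGroup E] [NormedSpace ℝ E] {ι : Type*} [Fintype ι]

lemma linearCombination_image_stdSimplex (v : ι → E) :
    Fintype.linearCombination ℝ v '' stdSimplex ℝ ι = convexHull ℝ (Set.range v) := by
  classical
  rw [← convexHull_rangle_single_eq_stdSimplex, LinearMap.image_convexHull, ← Set.range_comp]
  exact congrArg (fun w => convexHull ℝ (Set.range w)) (funext fun i => by simp)

variable [DecidableEq ι]

lemma linearCombination_image_shiftedSimplex (v : ι → E) (S : Finset ι) :
    Fintype.linearCombination ℝ v '' shiftedSimplex S =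
      ∑ i ∈ S, v i +ᵥ (#Sᶜ : ℝ) • convexHull ℝ (Set.range v) := by
  have hv : Fintype.linearCombination ℝ v ((S : Set ι).indicator 1) = ∑ i ∈ S, v i := by
    simp [Fintype.linearCombination_apply, Set.indicator_apply]
  rw [← linearCombination_image_stdSimplex, ← image_smul_set, ← hv, shiftedSimplex]
  simp only [← Set.image_vadd, Set.image_image, vadd_eq_add, map_add]

lemma convex_shiftedSimplex (S : Finset ι) : Convex ℝ (shiftedSimplex S) :=
  ((convex_stdSimplex ℝ ι).smul _).vadd _

lemma isCompact_shiftedSimplex (S : Finset ι) : IsCompact (shiftedSimplex S) :=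
  ((isCompact_stdSimplex ℝ ι).smul _).vadd _

variable [FiniteDimensional ℝ E]

lemma isWeaklyBounded_of_isBounded {A : Set E} (hA : Bornology.IsBounded A) :
    IsWeaklyBounded A := fun l => hA.image (LinearMap.toContinuousLinearMap l)

theorem sum_neg_one_pow_mul_signedIndicator_add [Nonempty ι] (v : ι → E) {Q : Set E}
    (hQ : Convex ℝ Q) (hb : Bornology.IsBounded Q) (y : E) :
    ∑ S : Finset ι, (-1) ^ #S * signedIndicator
      (∑ i ∈ S, v i +ᵥ (Q + (#Sᶜ : ℝ) • convexHull ℝ (Set.range v))) y = 0 := by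
  have h := sum_mul_signedIndicator_image_eq_zero (s := univ) (a := fun S : Finset ι => (-1) ^ #S)
    (A := fun S => Q ×ˢ shiftedSimplex S) (fun S _ => hQ.prod (convex_shiftedSimplex S))
    (fun S _ => isWeaklyBounded_of_isBounded (hb.prod (isCompact_shiftedSimplex S).isBounded))
    (fun x => ?_) (LinearMap.id.coprod (Fintype.linearCombination ℝ v)) y
  · refine .trans (sum_congr rfl fun S _ => ?_) h
    have himage (T : Set (ι → ℝ)) : LinearMap.id.coprod (Fintype.linearCombination ℝ v) '' Q ×ˢ T =
        Q + Fintype.linearCombination ℝ v '' T := by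
      rw [← Set.image2_add, Set.image2_image_right, ← Set.image_prod]
      rfl
    rw [himage, linearCombination_image_shiftedSimplex, add_vadd_comm]
  · simp only [signedIndicator_prod hQ (convex_shiftedSimplex _), mul_left_comm, ← mul_sum,
      sum_neg_one_pow_mul_signedIndicator_shiftedSimplex, mul_zero]

end SimplexRelation

section LatticePolytope

variable {n : ℕ}

lemma isLatticePt_iff_mem_span {x : Fin n → ℝ} :
    IsLatticePt x ↔ x ∈ Submodule.span ℤ (Set.range (Pi.basisFun ℝ (Fin n))) := by
  rw [Module.Basis.mem_span_iff_repr_mem ℤ (Pi.basisFun ℝ (Fin n)) x]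
  simp [IsLatticePt, eq_comm]

lemma finite_setOf_isLatticePt {A : Set (Fin n → ℝ)} (hA : Bornology.IsBounded A) :
    {x ∈ A | IsLatticePt x}.Finite := by
  simp only [isLatticePt_iff_mem_span]
  exact ZSpan.setFinite_inter _ hA

lemma IsLatticePt.sum {ι : Type*} {s : Finset ι} {x : ι → Fin n → ℝ}
    (hx : ∀ i ∈ s, IsLatticePt (x i)) : IsLatticePt (∑ i ∈ s, x i) := by
  simp only [isLatticePt_iff_mem_span] at *
  exact Submodule.sum_mem _ hx

variable {P Q : Set (Fin n → ℝ)}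

lemma IsLatticePolytope.convex (hP : IsLatticePolytope P) : Convex ℝ P := by
  obtain ⟨V, -, -, rfl⟩ := hP
  exact convex_convexHull ℝ _

lemma IsLatticePolytope.nonempty (hP : IsLatticePolytope P) : P.Nonempty := by
  obtain ⟨V, hV, -, rfl⟩ := hP
  exact (coe_nonempty.2 hV).convexHull

lemma IsLatticePolytope.isBounded (hP : IsLatticePolytope P) : Bornology.IsBounded P := by
  obtain ⟨V, -, -, rfl⟩ := hP
  exact isBounded_convexHull.2 V.finite_toSet.isBounded

lemma isLatticePolytope_zero : IsLatticePolytope (0 : Set (Fin n → ℝ)) :=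
  ⟨{0}, singleton_nonempty 0, by simp [isLatticePt_iff_mem_span], by simp [Set.singleton_zero]⟩

lemma IsLatticePolytope.add (hP : IsLatticePolytope P) (hQ : IsLatticePolytope Q) :
    IsLatticePolytope (P + Q) := by
  classical
  obtain ⟨V, hV, hVl, rfl⟩ := hP
  obtain ⟨W, hW, hWl, rfl⟩ := hQ
  refine ⟨V + W, hV.add hW, ?_, by rw [coe_add, convexHull_add]⟩
  simp only [isLatticePt_iff_mem_span, Finset.mem_add] at *
  rintro _ ⟨v, hv, w, hw, rfl⟩
  exact add_mem (hVl v hv) (hWl w hw)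

lemma IsLatticePolytope.natCast_smul (hP : IsLatticePolytope P) (k : ℕ) :
    IsLatticePolytope ((k : ℝ) • P) := by
  classical
  obtain ⟨V, hV, hVl, rfl⟩ := hP
  refine ⟨(k : ℝ) • V, hV.smul_finset, ?_, by rw [coe_smul_finset, convexHull_smul]⟩
  simp only [isLatticePt_iff_mem_span, Finset.mem_smul_finset] at *
  rintro _ ⟨v, hv, rfl⟩
  rw [Nat.cast_smul_eq_nsmul]
  exact nsmul_mem (hVl v hv) k

lemma IsLatticePolytope.sum {ι : Type*} {s : Finset ι} {P : ι → Set (Fin n → ℝ)}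
    (hP : ∀ i ∈ s, IsLatticePolytope (P i)) : IsLatticePolytope (∑ i ∈ s, P i) :=
  sum_induction _ _ (fun _ _ => IsLatticePolytope.add) isLatticePolytope_zero hP

end LatticePolytope

section SignedRelintCount

variable {n : ℕ} {A : Set (Fin n → ℝ)}

/-- The number of lattice points in the relative interior of `A`, with sign `(-1) ^ dim A`. For a
lattice polytope, Ehrhart reciprocity makes this the value of its Ehrhart polynomial at `-1`. -/
noncomputable def signedRelintCount (A : Set (Fin n → ℝ)) : ℝ := (-1) ^ adim A * (relintLat A).ncard

lemma signedRelintCount_eq_sum (hA : Convex ℝ A) {L : Finset (Fin n → ℝ)}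
    (hL : ∀ x ∈ L, IsLatticePt x) (hAL : ∀ x ∈ A, IsLatticePt x → x ∈ L) :
    signedRelintCount A = ∑ x ∈ L, signedIndicator A x := by
  classical
  have hcount : relintLat A = ↑{x ∈ L | x ∈ intrinsicCore A} := by
    ext x
    rw [relintLat, intrinsicInterior_eq_intrinsicCore hA, coe_filter]
    exact ⟨fun h => ⟨hAL x h.1.1 h.2, h.1⟩, fun h => ⟨h.2, hL x h.1⟩⟩
  rw [signedRelintCount, hcount, Set.ncard_coe_finset, card_filter, adim, direction_affineSpan,
    Nat.cast_sum, mul_sum]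
  exact sum_congr rfl fun x _ => by simp [signedIndicator, Set.indicator_apply]

theorem sum_mul_signedRelintCount_eq_zero {ι : Type*} {s : Finset ι} {a : ι → ℝ}
    {A : ι → Set (Fin n → ℝ)} (hA : ∀ k ∈ s, Convex ℝ (A k))
    (hb : ∀ k ∈ s, Bornology.IsBounded (A k))
    (h : ∀ x, ∑ k ∈ s, a k * signedIndicator (A k) x = 0) :
    ∑ k ∈ s, a k * signedRelintCount (A k) = 0 := by
  have hfin := finite_setOf_isLatticePt ((Bornology.isBounded_biUnion_finset s).2 hb)
  have hcount : ∀ k ∈ s, a k * signedRelintCount (A k) =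
      ∑ x ∈ hfin.toFinset, a k * signedIndicator (A k) x := fun k hk => by
    rw [← mul_sum, signedRelintCount_eq_sum (hA k hk) (fun x hx => (hfin.mem_toFinset.1 hx).2)]
    exact fun x hx hl => hfin.mem_toFinset.2 ⟨Set.mem_biUnion hk hx, hl⟩
  rw [sum_congr rfl hcount, sum_comm]
  exact sum_eq_zero fun x _ => h x

lemma signedRelintCount_vadd {v : Fin n → ℝ} (hv : IsLatticePt v) (A : Set (Fin n → ℝ)) :
    signedRelintCount (v +ᵥ A) = signedRelintCount A := by
  have hint : intrinsicInterior ℝ (v +ᵥ A) = v +ᵥ intrinsicInterior ℝ A :=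
    AffineIsometry.intrinsicInterior_image (AffineIsometryEquiv.constVAdd ℝ _ v).toAffineIsometry A
  have hlat : relintLat (v +ᵥ A) = v +ᵥ relintLat A := by
    ext x
    rw [isLatticePt_iff_mem_span] at hv
    simp only [relintLat, hint, Set.mem_vadd_set_iff_neg_vadd_mem, Set.mem_ofPred_eq, vadd_eq_add,
      isLatticePt_iff_mem_span, Submodule.add_mem_iff_right _ (neg_mem hv)]
  rw [signedRelintCount, signedRelintCount, hlat, Set.ncard_vadd_set, adim, adim,
    direction_affineSpan, direction_affineSpan, vectorSpan_vadd]

theorem sum_neg_one_pow_mul_signedRelintCount_add {ι : Type*} [Fintype ι] [DecidableEq ι]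
    [Nonempty ι] {v : ι → Fin n → ℝ} (hv : ∀ i, IsLatticePt (v i)) {Q : Set (Fin n → ℝ)}
    (hQ : Convex ℝ Q) (hb : Bornology.IsBounded Q) :
    ∑ S : Finset ι, (-1) ^ #S *
      signedRelintCount (Q + (#Sᶜ : ℝ) • convexHull ℝ (Set.range v)) = 0 := by
  have hconv (S : Finset ι) : Convex ℝ (Q + (#Sᶜ : ℝ) • convexHull ℝ (Set.range v)) :=
    hQ.add ((convex_convexHull ℝ _).smul _)
  have hbdd (S : Finset ι) : Bornology.IsBounded (Q + (#Sᶜ : ℝ) • convexHull ℝ (Set.range v)) :=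
    hb.add ((isBounded_convexHull.2 (Set.finite_range v).isBounded).smul₀ _)
  rw [← sum_mul_signedRelintCount_eq_zero (s := univ) (a := fun S : Finset ι => (-1) ^ #S)
    (fun S _ => (hconv S).vadd (∑ i ∈ S, v i)) (fun S _ => (hbdd S).vadd _)
    (sum_neg_one_pow_mul_signedIndicator_add v hQ hb)]
  exact sum_congr rfl fun S _ => by rw [signedRelintCount_vadd (.sum fun i _ => hv i)]

end SignedRelintCount

section FwdDiff

lemma fwdDiff_iter_card_eq_sum {M G ι : Type*} [AddCommMonoid M] [AddCommGroup G] [Fintype ι]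
    [DecidableEq ι] (f : M → G) (h y : M) :
    (fwdDiff h)^[Fintype.card ι] f y = ∑ S : Finset ι, (-1 : ℤ) ^ #S • f (y + #Sᶜ • h) := by
  rw [fwdDiff_iter_eq_sum_shift, ← (compl_involutive (α := Finset ι)).bijective.sum_comp]
  have h := sum_powerset_apply_card (fun k => (-1 : ℤ) ^ (Fintype.card ι - k) • f (y + k • h))
    (x := univ (α := ι))
  simp only [powerset_univ, card_univ] at h
  simp only [compl_compl, card_compl, h]
  exact sum_congr rfl fun k _ => by rw [mul_comm, mul_smul, Nat.cast_smul_eq_nsmul]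

variable {n : ℕ} {κ : Type*} [Fintype κ] [DecidableEq κ] {P : κ → Set (Fin n → ℝ)}

lemma sum_smul_add_single {E : Type*} [AddCommGroup E] [Module ℝ E] {P : κ → Set E}
    (hP : ∀ i, Convex ℝ (P i)) (t : κ → ℕ) (i : κ) (k : ℕ) :
    ∑ j, ((t + k • Pi.single i 1 : κ → ℕ) j : ℝ) • P j = ∑ j, (t j : ℝ) • P j + (k : ℝ) • P i := by
  have hterm (j : κ) : ((t + k • Pi.single i 1 : κ → ℕ) j : ℝ) • P j =
      (t j : ℝ) • P j + if j = i then (k : ℝ) • P j else 0 := by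
    obtain rfl | hj := eq_or_ne j i
    · simp [(hP j).add_smul]
    · simp [hj]
  simp only [hterm, sum_add_distrib, sum_ite_eq', mem_univ, if_true]

theorem exists_fwdDiff_iter_signedRelintCount_eq_zero (hP : ∀ i, IsLatticePolytope (P i)) (i : κ) :
    ∃ N, (fwdDiff (Pi.single i 1))^[N]
      (fun t : κ → ℕ => signedRelintCount (∑ j, (t j : ℝ) • P j)) = 0 := by
  classical
  obtain ⟨V, hV, hVl, hPV⟩ := hP i
  have := hV.to_subtype
  refine ⟨Fintype.card V, funext fun t => ?_⟩
  have hQ : IsLatticePolytope (∑ j, (t j : ℝ) • P j) := .sum fun j _ => (hP j).natCast_smul (t j)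
  have h := sum_neg_one_pow_mul_signedRelintCount_add (v := ((↑) : V → Fin n → ℝ))
    (fun v => hVl v v.2) hQ.convex hQ.isBounded
  rw [Subtype.range_coe_subtype, setOfPred_mem, ← hPV] at h
  rw [fwdDiff_iter_card_eq_sum, Pi.zero_apply, ← h]
  refine sum_congr rfl fun S _ => ?_
  rw [sum_smul_add_single fun j => (hP j).convex]
  norm_num

end FwdDiff

section Newton

variable {M M' G : Type*} [AddCommMonoid M] [AddCommMonoid M'] [AddCommGroup G]

lemma fwdDiff_commute (h h' : M) : Function.Commute (fwdDiff (G := G) h) (fwdDiff h') := by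
  intro f
  ext y
  simp only [fwdDiff, add_right_comm y h h']
  abel

lemma fwdDiff_iter_zero (h : M) (k : ℕ) : (fwdDiff h)^[k] (0 : M → G) = 0 :=
  Function.iterate_fixed (fwdDiff_const h 0) k

lemma fwdDiff_iter_eq_zero_of_le {h : M} {f : M → G} {N k : ℕ} (hf : (fwdDiff h)^[N] f = 0)
    (hk : N ≤ k) : (fwdDiff h)^[k] f = 0 := by
  rw [← Nat.sub_add_cancel hk, Function.iterate_add_apply, hf, fwdDiff_iter_zero]

lemma fwdDiff_iter_comp {e : M → M'} {h : M} {h' : M'} (he : ∀ x, e (x + h) = e x + h')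
    (f : M' → G) (k : ℕ) : (fwdDiff h)^[k] (f ∘ e) = (fwdDiff h')^[k] f ∘ e := by
  have hsemi : Function.Semiconj (fun f : M' → G => f ∘ e) (fwdDiff h') (fwdDiff h) := fun f => by
    ext x
    simp only [fwdDiff, Function.comp_apply, he]
  exact (hsemi.iterate_right k f).symm

lemma shift_eq_sum_range_choose_nsmul_fwdDiff_iter {h : M} {f : M → G} {N : ℕ}
    (hf : (fwdDiff h)^[N] f = 0) (y : M) (m : ℕ) :
    f (y + m • h) = ∑ k ∈ range N, m.choose k • (fwdDiff h)^[k] f y := by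
  rw [shift_eq_sum_fwdDiff_iter h f]
  obtain hm | hm := le_total (m + 1) N
  · refine sum_subset (range_mono hm) fun k _ hk => ?_
    rw [Nat.choose_eq_zero_of_lt (by simpa using hk), zero_nsmul]
  · refine (sum_subset (range_mono hm) fun k _ hk => ?_).symm
    rw [fwdDiff_iter_eq_zero_of_le hf (by simpa using hk), Pi.zero_apply, nsmul_zero]

variable {K : Type*} [Field K] [CharZero K]

lemma exists_mvPolynomial_eval_natCast_eq_choose {ι : Type*} (i : ι) (k : ℕ) :
    ∃ p : MvPolynomial ι K, ∀ t : ι → ℕ,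
      MvPolynomial.eval (fun j => (t j : K)) p = (t i).choose k := by
  refine ⟨MvPolynomial.C (k.factorial : K)⁻¹ *
    Polynomial.aeval (MvPolynomial.X i) (descPochhammer K k), fun t => ?_⟩
  have h := Polynomial.aeval_algHom_apply (MvPolynomial.aeval (R := K) fun j => (t j : K))
    (MvPolynomial.X i) (descPochhammer K k)
  rw [MvPolynomial.aeval_X, Polynomial.coe_aeval_eq_eval, descPochhammer_eval_eq_descFactorial,
    Nat.descFactorial_eq_factorial_mul_choose, Nat.cast_mul, MvPolynomial.aeval_eq_eval] at h
  rw [map_mul, MvPolynomial.eval_C]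
  exact (congrArg _ h.symm).trans (inv_mul_cancel_left₀ (Nat.cast_ne_zero.2 k.factorial_ne_zero) _)

/-- Newton's expansion in the first variable has polynomial coefficients by induction on the number
of variables. -/
theorem exists_mvPolynomial_eval_natCast_eq_of_fwdDiff_iter_eq_zero {n : ℕ} {G : (Fin n → ℕ) → K}
    (hG : ∀ i, ∃ N, (fwdDiff (Pi.single i 1))^[N] G = 0) :
    ∃ p : MvPolynomial (Fin n) K, ∀ t, MvPolynomial.eval (fun i => (t i : K)) p = G t := by
  induction n with
  | zero =>
    refine ⟨MvPolynomial.C (G 0), fun t => ?_⟩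
    rw [MvPolynomial.eval_C, Subsingleton.elim t 0]
  | succ n ih =>
    obtain ⟨N, hN⟩ := hG 0
    have hcoeff (k : ℕ) : ∃ p : MvPolynomial (Fin n) K, ∀ s,
        MvPolynomial.eval (fun i => (s i : K)) p =
          (fwdDiff (Pi.single 0 1))^[k] G (Fin.cons 0 s) := by
      refine ih fun i => ?_
      obtain ⟨N', hN'⟩ := hG i.succ
      have hcons (s : Fin n → ℕ) : (Fin.cons 0 (s + Pi.single i 1) : Fin (n + 1) → ℕ) =
          Fin.cons 0 s + Pi.single i.succ 1 := by
        ext j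
        cases j using Fin.cases <;> simp [Pi.single_apply]
      refine ⟨N', ?_⟩
      rw [← Function.comp_def ((fwdDiff (Pi.single 0 1))^[k] G), fwdDiff_iter_comp hcons,
        ((fwdDiff_commute _ _).iterate_iterate N' k).eq, hN', fwdDiff_iter_zero]
      rfl
    choose p hp using hcoeff
    choose q hq using exists_mvPolynomial_eval_natCast_eq_choose (K := K) (0 : Fin (n + 1))
    refine ⟨∑ k ∈ range N, q k * MvPolynomial.rename Fin.succ (p k), fun t => ?_⟩
    have ht : Fin.cons 0 (Fin.tail t) + t 0 • Pi.single 0 1 = t := by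
      ext j
      cases j using Fin.cases <;> simp [Fin.tail]
    rw [← congrArg G ht, shift_eq_sum_range_choose_nsmul_fwdDiff_iter hN, map_sum]
    refine sum_congr rfl fun k _ => ?_
    rw [map_mul, hq, MvPolynomial.eval_rename, nsmul_eq_mul, ← hp]
    rfl

end Newton

section Volume

variable {E : Type*} [NormedAddCommGroup E] [NormedSpace ℝ E] [FiniteDimensional ℝ E] {A : Set E}

lemma intrinsicInterior_smul (hA : Convex ℝ A) (c : ℝ) :
    intrinsicInterior ℝ (c • A) = c • intrinsicInterior ℝ A := by
  rw [intrinsicInterior_eq_intrinsicCore (hA.smul c), intrinsicInterior_eq_intrinsicCore hA]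
  exact intrinsicCore_image hA (LinearMap.lsmul ℝ E c).toAffineMap

variable [MeasurableSpace E] [BorelSpace E]

lemma measurableSet_intrinsicInterior (A : Set E) : MeasurableSet (intrinsicInterior ℝ A) := by
  rw [← closure_sdiff_intrinsicFrontier]
  exact isClosed_closure.measurableSet.diff
    (isClosed_intrinsicFrontier (AffineSubspace.closed_of_finiteDimensional _)).measurableSet

lemma measure_intrinsicInterior (hA : Convex ℝ A) (μ : Measure E) [μ.IsAddHaarMeasure] :
    μ (intrinsicInterior ℝ A) = μ A := by
  refine measure_eq_measure_of_null_sdiff intrinsicInterior_subset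
    (measure_mono_null (fun x hx => ?_) (hA.addHaar_frontier μ))
  apply intrinsicFrontier_subset_frontier (𝕜 := ℝ)
  rw [← closure_sdiff_intrinsicInterior]
  exact ⟨subset_closure hx.1, hx.2⟩

variable {n : ℕ} {P : Set (Fin n → ℝ)}

lemma adim_smul {c : ℝ} (hc : c ≠ 0) (P : Set (Fin n → ℝ)) : adim (c • P) = adim P := by
  have h := (c • LinearMap.id (R := ℝ) (M := Fin n → ℝ)).toAffineMap.map_vectorSpan (s := P)
  rw [LinearMap.toAffineMap_linear, Submodule.map_smul _ _ _ hc, Submodule.map_id] at h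
  rw [adim, adim, direction_affineSpan, direction_affineSpan, h]
  rfl

lemma neg_one_pow_adim_mul_volume (P : Set (Fin n → ℝ)) :
    (-1) ^ adim P * volume.real P = (-1) ^ n * volume.real P := by
  by_cases hspan : affineSpan ℝ P = ⊤
  · rw [adim, hspan, AffineSubspace.direction_top, finrank_top, Module.finrank_fin_fun]
  · have hnull : volume P = 0 :=
      measure_mono_null (subset_affineSpan ℝ P) (Measure.addHaar_affineSubspace _ _ hspan)
    simp [Measure.real, hnull]

lemma signedRelintCount_natCast_smul (hP : Convex ℝ P) {N : ℕ} (hN : N ≠ 0) :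
    signedRelintCount ((N : ℝ) • P) = (-1) ^ adim P * Nat.card ↑(intrinsicInterior ℝ P ∩
      (N : ℝ)⁻¹ • (Submodule.span ℤ (Set.range (Pi.basisFun ℝ (Fin n))) : Set (Fin n → ℝ))) := by
  have hN' : (N : ℝ) ≠ 0 := Nat.cast_ne_zero.2 hN
  have hlat : relintLat ((N : ℝ) • P) = (N : ℝ) • (intrinsicInterior ℝ P ∩
      (N : ℝ)⁻¹ • (Submodule.span ℤ (Set.range (Pi.basisFun ℝ (Fin n))) : Set (Fin n → ℝ))) := by
    rw [Set.smul_set_inter₀ hN', smul_inv_smul₀ hN', ← intrinsicInterior_smul hP]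
    ext x
    rw [relintLat, Set.mem_ofPred_eq, isLatticePt_iff_mem_span]
    rfl
  rw [signedRelintCount, adim_smul hN', hlat, ← Set.image_smul,
    Set.ncard_image_of_injective _ (smul_right_injective _ hN'), Nat.card_coe_set_eq]

theorem tendsto_signedRelintCount_natCast_smul_div_pow (hP : Convex ℝ P)
    (hb : Bornology.IsBounded P) :
    Tendsto (fun N : ℕ => signedRelintCount ((N : ℝ) • P) / (N : ℝ) ^ n) atTop
      (𝓝 ((-1) ^ n * volume.real P)) := by
  have hint : Convex ℝ (intrinsicInterior ℝ P) := by
    rw [intrinsicInterior_eq_intrinsicCore hP]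
    exact convex_intrinsicCore hP
  have hlim := tendsto_card_div_pow_atTop_volume (intrinsicInterior ℝ P)
    (hb.subset intrinsicInterior_subset) (measurableSet_intrinsicInterior P)
    (hint.addHaar_frontier volume)
  rw [Measure.real, measure_intrinsicInterior hP, ← Measure.real] at hlim
  rw [← neg_one_pow_adim_mul_volume]
  refine (hlim.const_mul _).congr' ?_
  filter_upwards [eventually_ne_atTop 0] with N hN
  rw [signedRelintCount_natCast_smul hP hN, Fintype.card_fin, mul_div_assoc]

end Volume

section MixedVolume

lemma prod_dvd_sum_neg_one_pow_mul_aeval_ite {ι R S : Type*} [Fintype ι] [DecidableEq ι]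
    [CommSemiring R] [CommRing S] [Algebra R S] (x : ι → S) (p : MvPolynomial ι R) :
    ∏ i, x i ∣ ∑ I : Finset ι, (-1) ^ #I *
      MvPolynomial.aeval (fun i => if i ∈ I then x i else 0) p := by
  induction p using MvPolynomial.induction_on' with
  | add p q hp hq => simpa only [map_add, mul_add, sum_add_distrib] using dvd_add hp hq
  | monomial m a =>
    have hprod (I : Finset ι) : ∏ i, (if i ∈ I then x i else 0) ^ m i =
        (∏ i ∈ univ \ I, 0 ^ m i) * ∏ i ∈ I, x i ^ m i := by
      rw [← prod_sdiff (subset_univ I)]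
      exact congrArg₂ _ (prod_congr rfl fun i hi => by rw [if_neg (mem_sdiff.1 hi).2])
        (prod_congr rfl fun i hi => by rw [if_pos hi])
    have hsum : ∏ i, (0 ^ m i - x i ^ m i) =
        ∑ I : Finset ι, (-1) ^ #I * ∏ i, (if i ∈ I then x i else 0) ^ m i := by
      simp only [prod_sub, powerset_univ, hprod, mul_assoc]
    simp only [MvPolynomial.aeval_monomial, Finsupp.prod_fintype, pow_zero, implies_true,
      mul_left_comm _ (algebraMap R S a), ← mul_sum, ← hsum]
    refine dvd_mul_of_dvd_right (prod_dvd_prod_of_dvd _ _ fun i _ => ?_) _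
    simpa using sub_dvd_pow_sub_pow 0 (x i) (m i)

lemma eval_eq_of_tendsto_eval_natCast {p : Polynomial ℝ} {L : ℝ}
    (hp : Tendsto (fun N : ℕ => p.eval (N : ℝ)) atTop (𝓝 L)) (x : ℝ) : p.eval x = L := by
  have hdeg : p.degree ≤ 0 := by
    by_contra! hdeg
    exact not_tendsto_nhds_of_tendsto_atTop
      ((p.abs_tendsto_atTop hdeg).comp tendsto_natCast_atTop_atTop) _ hp.abs
  rw [Polynomial.eq_C_of_degree_le_zero hdeg] at hp ⊢
  simpa using hp

variable {n : ℕ} {P : Fin n → Set (Fin n → ℝ)}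

lemma tendsto_sum_signedRelintCount_natCast_smul_div_pow (hP : ∀ i, IsLatticePolytope (P i)) :
    Tendsto (fun N : ℕ => (∑ I : Finset (Fin n),
      (-1) ^ #I * signedRelintCount ((N : ℝ) • ∑ i ∈ I, P i)) / (N : ℝ) ^ n) atTop
      (𝓝 (mixedVol P)) := by
  simp only [sum_div, mixedVol, mul_div_assoc]
  refine tendsto_finsetSum _ fun I _ => ?_
  have hI : IsLatticePolytope (∑ i ∈ I, P i) := .sum fun i _ => hP i
  have hsign : (-1 : ℝ) ^ (n - #I) = (-1) ^ #I * (-1) ^ n := by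
    rw [← pow_add]
    refine neg_one_pow_congr ?_
    rw [Nat.even_sub (card_finset_fin_le I), Nat.even_add, @iff_comm (Even n)]
  rw [hsign, mul_assoc]
  exact (tendsto_signedRelintCount_natCast_smul_div_pow hI.convex hI.isBounded).const_mul _

lemma exists_sum_signedRelintCount_natCast_smul_eq_pow_mul_eval
    (hP : ∀ i, IsLatticePolytope (P i)) :
    ∃ q : Polynomial ℝ, ∀ N : ℕ, ∑ I : Finset (Fin n),
      (-1) ^ #I * signedRelintCount ((N : ℝ) • ∑ i ∈ I, P i) = (N : ℝ) ^ n * q.eval (N : ℝ) := by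
  obtain ⟨p, hp⟩ := exists_mvPolynomial_eval_natCast_eq_of_fwdDiff_iter_eq_zero
    (exists_fwdDiff_iter_signedRelintCount_eq_zero hP)
  obtain ⟨q, hq⟩ := prod_dvd_sum_neg_one_pow_mul_aeval_ite (fun _ => Polynomial.X (R := ℝ)) p
  refine ⟨q, fun N => ?_⟩
  have hdilate (I : Finset (Fin n)) : (N : ℝ) • ∑ i ∈ I, P i =
      ∑ i, ((if i ∈ I then N else 0 : ℕ) : ℝ) • P i := by
    rw [smul_sum, ← sum_subset (subset_univ I) fun i _ hi => ?_]
    · exact sum_congr rfl fun i hi => by rw [if_pos hi]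
    · rw [if_neg hi, Nat.cast_zero, Set.zero_smul_set (hP i).nonempty]
  have hcount (I : Finset (Fin n)) : MvPolynomial.eval (fun i => if i ∈ I then (N : ℝ) else 0) p =
      signedRelintCount ((N : ℝ) • ∑ i ∈ I, P i) := by
    simpa only [hdilate, Nat.cast_ite, Nat.cast_zero] using hp fun i => if i ∈ I then N else 0
  have h := congrArg (Polynomial.aeval (N : ℝ)) hq
  simp only [map_sum, map_mul, map_pow, map_neg, map_one, MvPolynomial.comp_aeval_apply,
    apply_ite (Polynomial.aeval (N : ℝ)), Polynomial.aeval_X, map_zero, prod_const, card_univ,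
    Fintype.card_fin, Polynomial.coe_aeval_eq_eval, MvPolynomial.aeval_eq_eval,
    hcount] at h
  exact h

theorem mixedVol_eq_sum_neg_one_pow_mul_signedRelintCount (hP : ∀ i, IsLatticePolytope (P i)) :
    mixedVol P = ∑ I : Finset (Fin n), (-1) ^ #I * signedRelintCount (∑ i ∈ I, P i) := by
  obtain ⟨q, hq⟩ := exists_sum_signedRelintCount_natCast_smul_eq_pow_mul_eval hP
  have hlim : Tendsto (fun N : ℕ => q.eval (N : ℝ)) atTop (𝓝 (mixedVol P)) := by
    refine (tendsto_sum_signedRelintCount_natCast_smul_div_pow hP).congr' ?_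
    filter_upwards [eventually_ne_atTop 0] with N hN
    rw [hq, mul_div_cancel_left₀ _ (pow_ne_zero _ (Nat.cast_ne_zero.2 hN))]
  simpa [eval_eq_of_tendsto_eval_natCast hlim] using (hq 1).symm

lemma signedRelintCount_zero : signedRelintCount (0 : Set (Fin n → ℝ)) = 1 := by
  have hlat : relintLat (0 : Set (Fin n → ℝ)) = {0} := by
    ext x
    simp +contextual [relintLat, ← Set.singleton_zero, isLatticePt_iff_mem_span]
  rw [signedRelintCount, hlat, adim, ← Set.singleton_zero, direction_affineSpan,
    vectorSpan_singleton]
  simp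

end MixedVolume

/-- interior lattice point formula for the mixed volume. -/
theorem mixedVol_eq_one_add_alternating_sum_relint_lattice_points {n : ℕ}
    (P : Fin n → Set (Fin n → ℝ)) (hP : ∀ i, IsLatticePolytope (P i)) :
    mixedVol P =
      1 + ∑ I ∈ (Finset.univ : Finset (Fin n)).powerset.filter (·.Nonempty),
        (-1 : ℝ) ^ ((adim (∑ i ∈ I, P i) : ℤ) - (I.card : ℤ)) *
          (relintLat (∑ i ∈ I, P i)).ncard := by
  have hterm (I : Finset (Fin n)) : (-1 : ℝ) ^ #I * signedRelintCount (∑ i ∈ I, P i) =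
      (-1 : ℝ) ^ ((adim (∑ i ∈ I, P i) : ℤ) - (#I : ℤ)) * (relintLat (∑ i ∈ I, P i)).ncard := by
    rw [signedRelintCount, zpow_sub₀ (by norm_num), zpow_natCast, zpow_natCast, div_eq_mul_inv,
      ← inv_pow, inv_neg_one]
    ring
  have hempty : (univ.filter fun I : Finset (Fin n) => ¬ I.Nonempty) = {∅} := by
    ext I
    simp [not_nonempty_iff_eq_empty]
  rw [mixedVol_eq_sum_neg_one_pow_mul_signedRelintCount hP, powerset_univ,
    ← sum_filter_not_add_sum_filter univ (fun I : Finset (Fin n) => I.Nonempty), hempty,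
    sum_singleton, card_empty, pow_zero, one_mul, sum_empty, signedRelintCount_zero]
  exact congrArg _ (sum_congr rfl fun I _ => hterm I)
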